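/- Let f : ℝ → ℝ be continuously differentiable and let F be an antiderivative of f. Define W : Sym(n) → ℝ by W(A) = Σᵢ F(λᵢ(A)) = tr F(A), where λᵢ(A) are the eigenvalues of A and F(A) is the primary matrix function induced by F. Then W is a potential of the primary matrix function f : Sym(n) → Sym(n): for all A, H ∈ Sym(n), DW[A].H = ⟨f(A), H⟩ = tr(f(A)·H). -/

import Mathlib

open Matrix

attribute [local instance] Matrix.normedAddCommGroup Matrix.normedSpace

/-- The continuous linear map `H ↦ tr(Mᵀ H) = ⟨M, H⟩` on matrices. -/
noncomputable def frobeniusInnerCLM {n : ℕ} (M : Matrix (Fin n) (Fin n) ℝ) :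
    Matrix (Fin n) (Fin n) ℝ →L[ℝ] ℝ :=
  LinearMap.toContinuousLinearMap
    ((Matrix.traceLinearMap (Fin n) ℝ ℝ).comp (LinearMap.mulLeft ℝ Mᵀ))

/-!
Let `uᵢ`, `aᵢ` and `vⱼ`, `bⱼ` be the eigenvectors and eigenvalues of `A` and `B`, and let
`wᵢⱼ = |⟨uᵢ, vⱼ⟩|²`. These weights are doubly stochastic, and expanding traces in the two
eigenbases gives

* `tr F(B) - tr F(A) - Re tr((B - A) f(A)) = ∑ᵢⱼ wᵢⱼ (F(bⱼ) - F(aᵢ) - f(aᵢ) (bⱼ - aᵢ))`,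
* `tr((B - A)²) = ∑ᵢⱼ wᵢⱼ (bⱼ - aᵢ)²`.

The second identity forces every `bⱼ` to be close to some `aᵢ`, where `F` is differentiable. So the
scalar Taylor remainders are at most `ε |bⱼ - aᵢ| + C (bⱼ - aᵢ)²`, and averaging against `w` turns
this into a bound `o(‖B - A‖)` by Cauchy-Schwarz. Differentiating eigenvalues or eigenvectors is
never needed.
-/

open Filter Topology RCLike

lemma norm_trace_mul_self_le {𝕜 ι : Type*} [RCLike 𝕜] [Fintype ι] (X : Matrix ι ι 𝕜) :
    ‖(X * X).trace‖ ≤ (Fintype.card ι * ‖X‖) ^ 2 := by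
  calc
    ‖(X * X).trace‖ = ‖∑ i, ∑ j, X i j * X j i‖ := rfl
    _ ≤ ∑ i, ∑ j, ‖X i j * X j i‖ :=
      norm_sum_le_of_le _ fun i _ => norm_sum_le _ _
    _ ≤ ∑ _i : ι, ∑ _j : ι, ‖X‖ * ‖X‖ := by
      gcongr
      rw [norm_mul]
      gcongr <;> exact norm_entry_le_entrywise_sup_norm X
    _ = (Fintype.card ι * ‖X‖) ^ 2 := by
      simp only [Finset.sum_const, Finset.card_univ, nsmul_eq_mul]
      ring

section Overlap

variable {𝕜 ι : Type*} [RCLike 𝕜] [Fintype ι] [DecidableEq ι] {A B : Matrix ι ι 𝕜}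

/-- The squared overlap `|⟨uᵢ, vⱼ⟩|²` of the chosen orthonormal eigenbases of two Hermitian
matrices. The matrix of overlaps is doubly stochastic and couples the spectra of `A` and `B`. -/
noncomputable def eigenvectorOverlap (hA : A.IsHermitian) (hB : B.IsHermitian) (i j : ι) : ℝ :=
  ‖inner 𝕜 (hA.eigenvectorBasis i) (hB.eigenvectorBasis j)‖ ^ 2

lemma eigenvectorOverlap_nonneg (hA : A.IsHermitian) (hB : B.IsHermitian) (i j : ι) :
    0 ≤ eigenvectorOverlap hA hB i j :=
  sq_nonneg _

lemma eigenvectorOverlap_comm (hA : A.IsHermitian) (hB : B.IsHermitian) (i j : ι) :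
    eigenvectorOverlap hA hB i j = eigenvectorOverlap hB hA j i := by
  rw [eigenvectorOverlap, eigenvectorOverlap, norm_inner_symm]

lemma sum_eigenvectorOverlap_right (hA : A.IsHermitian) (hB : B.IsHermitian) (i : ι) :
    ∑ j, eigenvectorOverlap hA hB i j = 1 := by
  simp only [eigenvectorOverlap, OrthonormalBasis.sum_sq_norm_inner_left,
    OrthonormalBasis.norm_eq_one, one_pow]

lemma sum_eigenvectorOverlap_left (hA : A.IsHermitian) (hB : B.IsHermitian) (j : ι) :
    ∑ i, eigenvectorOverlap hA hB i j = 1 := by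
  simp only [eigenvectorOverlap_comm hA hB, sum_eigenvectorOverlap_right]

lemma toEuclideanLin_cfc_eigenvectorBasis (hA : A.IsHermitian) (f : ℝ → ℝ) (i : ι) :
    toEuclideanLin (cfc f A) (hA.eigenvectorBasis i) =
      (f (hA.eigenvalues i) : 𝕜) • hA.eigenvectorBasis i := by
  rw [toLpLin_apply, hA.cfc_eq, IsHermitian.cfc, Unitary.conjStarAlgAut_apply, ← mulVec_mulVec,
    hA.star_eigenvectorUnitary_mulVec, ← mulVec_mulVec, diagonal_mulVec_single, mul_one,
    mulVec_single, hA.eigenvectorUnitary_col_eq, op_smul_eq_smul]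
  rfl

lemma toEuclideanLin_eigenvectorBasis (hA : A.IsHermitian) (i : ι) :
    toEuclideanLin A (hA.eigenvectorBasis i) =
      (hA.eigenvalues i : 𝕜) • hA.eigenvectorBasis i := by
  simpa only [cfc_id ℝ A hA.isSelfAdjoint, id_eq] using toEuclideanLin_cfc_eigenvectorBasis hA id i

lemma trace_mul_cfc (hA : A.IsHermitian) (f : ℝ → ℝ) (M : Matrix ι ι 𝕜) :
    (M * cfc f A).trace = ∑ i, (f (hA.eigenvalues i) : 𝕜) *
      inner 𝕜 (hA.eigenvectorBasis i) (toEuclideanLin M (hA.eigenvectorBasis i)) := by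
  have htrace : (M * cfc f A).trace = LinearMap.trace 𝕜 _ (toEuclideanLin (M * cfc f A)) := by
    rw [toEuclideanLin_eq_toLin_orthonormal, trace_toLin_eq]
  rw [htrace, LinearMap.trace_eq_sum_inner _ hA.eigenvectorBasis]
  refine Finset.sum_congr rfl fun i _ => ?_
  rw [toLpLin_mul_same, LinearMap.comp_apply, toEuclideanLin_cfc_eigenvectorBasis, map_smul,
    inner_smul_right]

lemma re_inner_toEuclideanLin_eigenvectorBasis (hA : A.IsHermitian) (hB : B.IsHermitian) (i : ι) :
    re (inner 𝕜 (hA.eigenvectorBasis i) (toEuclideanLin B (hA.eigenvectorBasis i))) =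
      ∑ j, eigenvectorOverlap hA hB i j * hB.eigenvalues j := by
  rw [← hB.eigenvectorBasis.sum_inner_mul_inner, map_sum]
  refine Finset.sum_congr rfl fun j _ => ?_
  rw [← isSymmetric_toEuclideanLin_iff.mpr hB, toEuclideanLin_eigenvectorBasis, inner_smul_left,
    conj_ofReal, mul_left_comm, re_ofReal_mul, inner_mul_symm_re_eq_norm, norm_mul,
    norm_inner_symm (hB.eigenvectorBasis j), ← sq, mul_comm, eigenvectorOverlap]

lemma re_trace_sub_mul_cfc (hA : A.IsHermitian) (hB : B.IsHermitian) (f : ℝ → ℝ) :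
    re ((B - A) * cfc f A).trace = ∑ i, ∑ j, eigenvectorOverlap hA hB i j *
      (f (hA.eigenvalues i) * (hB.eigenvalues j - hA.eigenvalues i)) := by
  rw [trace_mul_cfc hA, map_sum]
  refine Finset.sum_congr rfl fun i _ => ?_
  have hself : re (inner 𝕜 (hA.eigenvectorBasis i)
      (toEuclideanLin A (hA.eigenvectorBasis i))) = hA.eigenvalues i := by
    rw [toEuclideanLin_eigenvectorBasis, inner_smul_right, re_ofReal_mul,
      inner_self_eq_norm_sq, OrthonormalBasis.norm_eq_one, one_pow, mul_one]
  calc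
    _ = f (hA.eigenvalues i) *
        (∑ j, eigenvectorOverlap hA hB i j * hB.eigenvalues j - hA.eigenvalues i) := by
      rw [re_ofReal_mul, map_sub, LinearMap.sub_apply, inner_sub_right, map_sub, hself,
        re_inner_toEuclideanLin_eigenvectorBasis hA hB]
    _ = f (hA.eigenvalues i) * ∑ j, eigenvectorOverlap hA hB i j *
        (hB.eigenvalues j - hA.eigenvalues i) := by
      simp only [mul_sub, Finset.sum_sub_distrib, ← Finset.sum_mul, sum_eigenvectorOverlap_right,
        one_mul]
    _ = _ := by
      rw [Finset.mul_sum]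
      exact Finset.sum_congr rfl fun j _ => mul_left_comm _ _ _

lemma re_trace_sub_mul_sub (hA : A.IsHermitian) (hB : B.IsHermitian) :
    re ((B - A) * (B - A)).trace = ∑ i, ∑ j, eigenvectorOverlap hA hB i j *
      (hB.eigenvalues j - hA.eigenvalues i) ^ 2 := by
  have hAid := re_trace_sub_mul_cfc hA hB id
  have hBid := re_trace_sub_mul_cfc hB hA id
  rw [cfc_id ℝ A hA.isSelfAdjoint] at hAid
  rw [cfc_id ℝ B hB.isSelfAdjoint, Finset.sum_comm] at hBid
  simp only [eigenvectorOverlap_comm hB hA, id_eq] at hAid hBid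
  calc
    _ = -re ((A - B) * B).trace - re ((B - A) * A).trace := by
      rw [← map_neg, ← map_sub, ← trace_neg, ← trace_sub, ← Matrix.neg_mul, neg_sub, Matrix.mul_sub]
    _ = _ := by
      rw [hAid, hBid]
      simp only [← Finset.sum_neg_distrib, ← Finset.sum_sub_distrib]
      exact Finset.sum_congr rfl fun i _ => Finset.sum_congr rfl fun j _ => by ring

lemma sum_eigenvectorOverlap_mul_sq_le (hA : A.IsHermitian) (hB : B.IsHermitian) :
    ∑ i, ∑ j, eigenvectorOverlap hA hB i j * (hB.eigenvalues j - hA.eigenvalues i) ^ 2 ≤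
      (Fintype.card ι * ‖B - A‖) ^ 2 := by
  rw [← re_trace_sub_mul_sub]
  exact (re_le_norm _).trans (norm_trace_mul_self_le _)

lemma sum_eigenvectorOverlap_mul_abs_le (hA : A.IsHermitian) (hB : B.IsHermitian) :
    ∑ i, ∑ j, eigenvectorOverlap hA hB i j * |hB.eigenvalues j - hA.eigenvalues i| ≤
      √(Fintype.card ι) * (Fintype.card ι * ‖B - A‖) := by
  have hmass : ∑ i, ∑ j, eigenvectorOverlap hA hB i j = Fintype.card ι := by
    simp [sum_eigenvectorOverlap_right]
  refine le_of_sq_le_sq ?_ (by positivity)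
  calc
    _ ≤ (∑ i, ∑ j, eigenvectorOverlap hA hB i j) * ∑ i, ∑ j,
        eigenvectorOverlap hA hB i j * (hB.eigenvalues j - hA.eigenvalues i) ^ 2 := by
      simp only [← Fintype.sum_prod_type']
      refine Finset.sum_sq_le_sum_mul_sum_of_sq_le_mul _
        (fun p _ => eigenvectorOverlap_nonneg hA hB p.1 p.2)
        (fun p _ => mul_nonneg (eigenvectorOverlap_nonneg hA hB p.1 p.2) (sq_nonneg _))
        fun p _ => le_of_eq ?_
      rw [mul_pow, sq_abs, sq, mul_assoc]
    _ ≤ Fintype.card ι * (Fintype.card ι * ‖B - A‖) ^ 2 := by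
      rw [hmass]
      gcongr
      exact sum_eigenvectorOverlap_mul_sq_le hA hB
    _ = _ := by rw [mul_pow (√_), Real.sq_sqrt (Nat.cast_nonneg _)]

lemma exists_abs_eigenvalues_sub_le (hA : A.IsHermitian) (hB : B.IsHermitian) (j : ι) :
    ∃ i, |hB.eigenvalues j - hA.eigenvalues i| ≤ Fintype.card ι * ‖B - A‖ := by
  have : Nonempty ι := ⟨j⟩
  obtain ⟨k, hk⟩ := Finite.exists_min fun i => |hB.eigenvalues j - hA.eigenvalues i|
  refine ⟨k, abs_le_of_sq_le_sq ?_ (by positivity)⟩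
  calc
    (hB.eigenvalues j - hA.eigenvalues k) ^ 2
      = ∑ i, eigenvectorOverlap hA hB i j * (hB.eigenvalues j - hA.eigenvalues k) ^ 2 := by
      rw [← Finset.sum_mul, sum_eigenvectorOverlap_left, one_mul]
    _ ≤ ∑ i, eigenvectorOverlap hA hB i j * (hB.eigenvalues j - hA.eigenvalues i) ^ 2 := by
      gcongr ∑ i, _ * ?_ with i
      · exact eigenvectorOverlap_nonneg hA hB i j
      · exact sq_le_sq.2 (hk i)
    _ ≤ ∑ i, ∑ l, eigenvectorOverlap hA hB i l * (hB.eigenvalues l - hA.eigenvalues i) ^ 2 := by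
      gcongr with i
      exact Finset.single_le_sum (f := fun l => eigenvectorOverlap hA hB i l *
        (hB.eigenvalues l - hA.eigenvalues i) ^ 2)
        (fun l _ => mul_nonneg (eigenvectorOverlap_nonneg hA hB i l) (sq_nonneg _))
        (Finset.mem_univ j)
    _ ≤ (Fintype.card ι * ‖B - A‖) ^ 2 := sum_eigenvectorOverlap_mul_sq_le hA hB

lemma eventually_eigenvalues_mem (hA : A.IsHermitian) {s : Set ℝ}
    (hs : ∀ i, s ∈ 𝓝 (hA.eigenvalues i)) :
    ∀ᶠ B in 𝓝 A, ∀ (hB : B.IsHermitian) (j : ι), hB.eigenvalues j ∈ s := by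
  have hball : ∀ᶠ r in 𝓝 (0 : ℝ), ∀ i, Metric.closedBall (hA.eigenvalues i) r ⊆ s :=
    eventually_all.2 fun i => eventually_closedBall_subset (hs i)
  have hradius : Tendsto (fun B => Fintype.card ι * ‖B - A‖) (𝓝 A) (𝓝 0) := by
    have : Continuous fun B => Fintype.card ι * ‖B - A‖ := by fun_prop
    simpa using this.tendsto A
  filter_upwards [hradius.eventually hball] with B hBs hB j
  obtain ⟨i, hi⟩ := exists_abs_eigenvalues_sub_le hA hB j
  exact hBs i (by rwa [Metric.mem_closedBall, Real.dist_eq])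

end Overlap

-- Near `k ≠ a` the quadratic term is bounded below, so a large `C` absorbs the whole remainder.
lemma eventually_atTop_eventually_abs_sub_sub_mul_le {F : ℝ → ℝ} {F' a k ε : ℝ}
    (ha : HasDerivAt F F' a) (hk : ContinuousAt F k) (hε : 0 < ε) :
    ∀ᶠ C in atTop, ∀ᶠ t in 𝓝 k,
      |F t - F a - F' * (t - a)| ≤ ε * |t - a| + C * (t - a) ^ 2 := by
  rcases eq_or_ne k a with rfl | hka
  · filter_upwards [eventually_ge_atTop 0] with C hC
    filter_upwards [(hasDerivAt_iff_isLittleO.mp ha).bound hε] with t ht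
    rw [smul_eq_mul, mul_comm (t - k)] at ht
    exact ht.trans (le_add_of_nonneg_right (by positivity))
  · have hcont : ContinuousAt (fun t => |F t - F a - F' * (t - a)| / (t - a) ^ 2) k := by
      have : (k - a) ^ 2 ≠ 0 := pow_ne_zero 2 (sub_ne_zero.2 hka)
      fun_prop (disch := assumption)
    filter_upwards [eventually_gt_atTop (|F k - F a - F' * (k - a)| / (k - a) ^ 2)] with C hC
    filter_upwards [hcont.eventually_lt_const hC, eventually_ne_nhds hka] with t ht hta
    have hpos : 0 < (t - a) ^ 2 := by have := sub_ne_zero.2 hta; positivity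
    exact ((div_lt_iff₀ hpos).1 ht).le.trans (le_add_of_nonneg_left (by positivity))

/-- The real inner product `H ↦ Re tr(Mᴴ H)`, the Frobenius inner product when `𝕜 = ℝ`. -/
noncomputable def reFrobeniusInnerCLM {𝕜 ι : Type*} [RCLike 𝕜] [Fintype ι] (M : Matrix ι ι 𝕜) :
    Matrix ι ι 𝕜 →L[ℝ] ℝ :=
  LinearMap.toContinuousLinearMap
    (reLm ∘ₗ traceLinearMap ι ℝ 𝕜 ∘ₗ LinearMap.mulLeft ℝ Mᴴ)

section SpectralFunction

variable {𝕜 ι : Type*} [RCLike 𝕜] [Fintype ι] [DecidableEq ι] {A B : Matrix ι ι 𝕜}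

lemma sum_eigenvalues_sub_re_trace (hA : A.IsHermitian) (hB : B.IsHermitian) (f F : ℝ → ℝ) :
    ∑ j, F (hB.eigenvalues j) - ∑ i, F (hA.eigenvalues i) - re ((B - A) * cfc f A).trace =
      ∑ i, ∑ j, eigenvectorOverlap hA hB i j * (F (hB.eigenvalues j) - F (hA.eigenvalues i) -
        f (hA.eigenvalues i) * (hB.eigenvalues j - hA.eigenvalues i)) := by
  have hsumA : ∑ i, F (hA.eigenvalues i) =
      ∑ i, ∑ j, eigenvectorOverlap hA hB i j * F (hA.eigenvalues i) := by
    simp only [← Finset.sum_mul, sum_eigenvectorOverlap_right, one_mul]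
  have hsumB : ∑ j, F (hB.eigenvalues j) =
      ∑ i, ∑ j, eigenvectorOverlap hA hB i j * F (hB.eigenvalues j) := by
    rw [Finset.sum_comm]
    simp only [← Finset.sum_mul, sum_eigenvectorOverlap_left, one_mul]
  rw [hsumA, hsumB, re_trace_sub_mul_cfc hA hB]
  simp only [mul_sub, Finset.sum_sub_distrib]

lemma abs_sum_eigenvalues_sub_re_trace_le (hA : A.IsHermitian) (hB : B.IsHermitian)
    {f F : ℝ → ℝ} {ε C : ℝ} (hε : 0 ≤ ε) (hC : 0 ≤ C)
    (h : ∀ i j, |F (hB.eigenvalues j) - F (hA.eigenvalues i) -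
        f (hA.eigenvalues i) * (hB.eigenvalues j - hA.eigenvalues i)| ≤
      ε * |hB.eigenvalues j - hA.eigenvalues i| +
        C * (hB.eigenvalues j - hA.eigenvalues i) ^ 2) :
    |∑ j, F (hB.eigenvalues j) - ∑ i, F (hA.eigenvalues i) - re ((B - A) * cfc f A).trace| ≤
      ε * (√(Fintype.card ι) * (Fintype.card ι * ‖B - A‖)) +
        C * (Fintype.card ι * ‖B - A‖) ^ 2 := by
  rw [sum_eigenvalues_sub_re_trace]
  calc
    _ ≤ ∑ i, ∑ j, eigenvectorOverlap hA hB i j *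
        (ε * |hB.eigenvalues j - hA.eigenvalues i| +
          C * (hB.eigenvalues j - hA.eigenvalues i) ^ 2) := by
      refine (Finset.abs_sum_le_sum_abs _ _).trans (Finset.sum_le_sum fun i _ => ?_)
      refine (Finset.abs_sum_le_sum_abs _ _).trans (Finset.sum_le_sum fun j _ => ?_)
      rw [abs_mul, abs_of_nonneg (eigenvectorOverlap_nonneg hA hB i j)]
      exact mul_le_mul_of_nonneg_left (h i j) (eigenvectorOverlap_nonneg hA hB i j)
    _ = ε * ∑ i, ∑ j, eigenvectorOverlap hA hB i j * |hB.eigenvalues j - hA.eigenvalues i| +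
        C * ∑ i, ∑ j, eigenvectorOverlap hA hB i j *
          (hB.eigenvalues j - hA.eigenvalues i) ^ 2 := by
      simp only [Finset.mul_sum, ← Finset.sum_add_distrib, mul_add, mul_left_comm]
    _ ≤ _ := by
      gcongr
      · exact sum_eigenvectorOverlap_mul_abs_le hA hB
      · exact sum_eigenvectorOverlap_mul_sq_le hA hB

lemma exists_eventually_abs_sum_eigenvalues_sub_re_trace_le {f F : ℝ → ℝ} (hA : A.IsHermitian)
    (hF : ∀ i, HasDerivAt F (f (hA.eigenvalues i)) (hA.eigenvalues i)) {ε : ℝ} (hε : 0 < ε) :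
    ∃ C, ∀ᶠ B in 𝓝 A, ∀ hB : B.IsHermitian,
      |∑ j, F (hB.eigenvalues j) - ∑ i, F (hA.eigenvalues i) - re ((B - A) * cfc f A).trace| ≤
        ε * (√(Fintype.card ι) * (Fintype.card ι * ‖B - A‖)) +
          C * (Fintype.card ι * ‖B - A‖) ^ 2 := by
  obtain ⟨C, hC, hrem⟩ := ((eventually_ge_atTop 0).and (eventually_all.2 fun i =>
    eventually_all.2 fun k =>
      eventually_atTop_eventually_abs_sub_sub_mul_le (hF i) (hF k).continuousAt hε)).exists
  refine ⟨C, ?_⟩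
  filter_upwards [eventually_eigenvalues_mem hA fun k => eventually_all.2 fun i => hrem i k]
    with B hspec hB
  exact abs_sum_eigenvalues_sub_re_trace_le hA hB hε.le hC fun i j => hspec hB j i

lemma reFrobeniusInnerCLM_cfc_apply (f : ℝ → ℝ) (A H : Matrix ι ι 𝕜) :
    reFrobeniusInnerCLM (cfc f A) H = re (H * cfc f A).trace := by
  have hself : (cfc f A)ᴴ = cfc f A := (cfc_predicate f A).star_eq
  rw [trace_mul_comm]
  exact congrArg (fun M => re (M * H).trace) hself

theorem stmt_4_general {f F : ℝ → ℝ} {W : Matrix ι ι 𝕜 → ℝ}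
    (hW : ∀ (X : Matrix ι ι 𝕜) (hX : X.IsHermitian), W X = ∑ i, F (hX.eigenvalues i))
    (hA : A.IsHermitian)
    (hF : ∀ i, HasDerivAt F (f (hA.eigenvalues i)) (hA.eigenvalues i)) :
    HasFDerivWithinAt W (reFrobeniusInnerCLM (cfc f A)) {X : Matrix ι ι 𝕜 | X.IsHermitian} A := by
  refine .of_isLittleO (Asymptotics.isLittleO_iff.2 fun c hc => ?_)
  set N : ℝ := (Fintype.card ι : ℝ)
  obtain ⟨ε, hε, hεc⟩ := exists_pos_mul_lt hc (√N * N)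
  obtain ⟨C, hbound⟩ := exists_eventually_abs_sum_eigenvalues_sub_re_trace_le hA hF hε
  have hcoeff : ∀ᶠ B in 𝓝 A, √N * N * ε + C * N ^ 2 * ‖B - A‖ < c := by
    have hcont : Continuous fun B : Matrix ι ι 𝕜 => √N * N * ε + C * N ^ 2 * ‖B - A‖ := by fun_prop
    exact hcont.continuousAt.eventually_lt_const (by simpa using hεc)
  filter_upwards [self_mem_nhdsWithin, mem_nhdsWithin_of_mem_nhds hbound,
    mem_nhdsWithin_of_mem_nhds hcoeff] with B hB hBbound hBcoeff
  have hB_bound := hBbound hB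
  rw [← hW, ← hW, ← reFrobeniusInnerCLM_cfc_apply] at hB_bound
  calc
    _ ≤ ε * (√N * (N * ‖B - A‖)) + C * (N * ‖B - A‖) ^ 2 := hB_bound
    _ = (√N * N * ε + C * N ^ 2 * ‖B - A‖) * ‖B - A‖ := by ring
    _ ≤ c * ‖B - A‖ := by gcongr

end SpectralFunction

lemma frobeniusInnerCLM_eq_reFrobeniusInnerCLM {n : ℕ} (M : Matrix (Fin n) (Fin n) ℝ) :
    frobeniusInnerCLM M = reFrobeniusInnerCLM M :=
  rfl

lemma eq_cfc_of_forall_conj_diagonal {ι : Type*} [Fintype ι] [DecidableEq ι] {f : ℝ → ℝ}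
    {fm : Matrix ι ι ℝ → Matrix ι ι ℝ}
    (hfm : ∀ (Q : Matrix ι ι ℝ) (d : ι → ℝ), Qᵀ * Q = 1 →
      fm (Qᵀ * diagonal d * Q) = Qᵀ * diagonal (f ∘ d) * Q)
    {A : Matrix ι ι ℝ} (hA : A.IsHermitian) : fm A = cfc f A := by
  set U : Matrix ι ι ℝ := ↑hA.eigenvectorUnitary
  have hcfc (g : ℝ → ℝ) : cfc g A = Uᵀᵀ * diagonal (g ∘ hA.eigenvalues) * Uᵀ := by
    rw [hA.cfc_eq, IsHermitian.cfc, Unitary.conjStarAlgAut_apply, transpose_transpose]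
    rfl
  have horth : Uᵀᵀ * Uᵀ = 1 := Unitary.coe_mul_star_self hA.eigenvectorUnitary
  calc
    fm A = fm (cfc id A) := by rw [cfc_id ℝ A hA.isSelfAdjoint]
    _ = cfc f A := by rw [hcfc, hfm _ _ horth, hcfc]; rfl

/-- If `F' = f` with `f` continuously differentiable, then `W(A) = Σᵢ F(λᵢ(A))` is a
potential of the primary matrix function induced by `f` on the symmetric matrices:
`DW[A].H = ⟨f(A), H⟩` for all symmetric `A, H`. -/
theorem stmt_4 {n : ℕ} (f F : ℝ → ℝ) (hf : ContDiff ℝ 1 f)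
    (hF : ∀ t : ℝ, HasDerivAt F (f t) t)
    (W : Matrix (Fin n) (Fin n) ℝ → ℝ)
    (hW : ∀ (A : Matrix (Fin n) (Fin n) ℝ) (hA : A.IsHermitian),
      W A = ∑ i, F (hA.eigenvalues i))
    (fm : Matrix (Fin n) (Fin n) ℝ → Matrix (Fin n) (Fin n) ℝ)
    (hfm : ∀ (Q : Matrix (Fin n) (Fin n) ℝ) (d : Fin n → ℝ), Qᵀ * Q = 1 →
      fm (Qᵀ * Matrix.diagonal d * Q) = Qᵀ * Matrix.diagonal (f ∘ d) * Q) :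
    ∀ A : Matrix (Fin n) (Fin n) ℝ, A.IsHermitian →
      HasFDerivWithinAt W (frobeniusInnerCLM (fm A))
        {X : Matrix (Fin n) (Fin n) ℝ | X.IsSymm} A := by
  intro A hA
  simpa only [frobeniusInnerCLM_eq_reFrobeniusInnerCLM, eq_cfc_of_forall_conj_diagonal hfm hA,
    isHermitian_iff_isSymm] using stmt_4_general hW hA fun i => hF (hA.eigenvalues i)
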